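/- Let N ≥ 0, let w₀,…,w_N be integers, and let ℂ* act on ℙ^N(ℂ) by η·(x₀:…:x_N) = (η^{w₀}x₀:…:η^{w_N}x_N). Let X ⊆ ℙ^N(ℂ) be a locally closed subset stable under this action, such that X has only finitely many fixed points. For a fixed point x₀ ∈ X, let X_{x₀} = {x ∈ X : η·x → x₀ as η → 0}. Define a relation ≺ on the set of fixed points of X as the reflexive-transitive closure of the relation: x ≺₀ x' if and only if cl(X_x) ∩ X_{x'} ≠ ∅, where cl denotes closure in ℙ^N(ℂ). Then ≺ is antisymmetric, i.e., it is a partial order on the set of fixed points of X. -/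

import Mathlib

open scoped LinearAlgebra.Projectivization
open Filter Topology

/-- The quotient topology on `ℙ^N(ℂ)`, as the quotient of `ℂ^{N+1} ∖ {0}`
by nonzero scalar multiplication. -/
noncomputable instance projTopology (N : ℕ) :
    TopologicalSpace (ℙ ℂ (Fin (N + 1) → ℂ)) :=
  inferInstanceAs (TopologicalSpace (Quotient (projectivizationSetoid ℂ (Fin (N + 1) → ℂ))))

/-- The filter of punctured neighbourhoods of `0` in `ℂ`, restricted to `ℂ*`. -/
noncomputable def zeroFilter : Filter ℂˣ := Filter.comap (Units.val) (𝓝[≠] (0 : ℂ))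

/-- The action of `η ∈ ℂ*` on `ℙ^N(ℂ)` given by
`η·(x₀:…:x_N) = (η^{w₀}x₀:…:η^{w_N}x_N)`. -/
noncomputable def wAct {N : ℕ} (w : Fin (N + 1) → ℤ) (η : ℂˣ)
    (x : ℙ ℂ (Fin (N + 1) → ℂ)) : ℙ ℂ (Fin (N + 1) → ℂ) :=
  Projectivization.mk ℂ (fun j => (η : ℂ) ^ (w j) * x.rep j) (by
    intro h
    apply x.rep_nonzero
    funext j
    have h1 : (η : ℂ) ^ (w j) * x.rep j = 0 := congrFun h j
    rcases mul_eq_zero.1 h1 with h2 | h2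
    · exact absurd h2 (zpow_ne_zero _ η.ne_zero)
    · exact h2)

/-- The set of fixed points of the action lying in `X`. -/
def fixedIn {N : ℕ} (w : Fin (N + 1) → ℤ) (X : Set (ℙ ℂ (Fin (N + 1) → ℂ))) :
    Set (ℙ ℂ (Fin (N + 1) → ℂ)) :=
  {x ∈ X | ∀ η : ℂˣ, wAct w η x = x}

/-- The attracting set in `X` of a point `x₀`. -/
noncomputable def attractIn {N : ℕ} (w : Fin (N + 1) → ℤ)
    (X : Set (ℙ ℂ (Fin (N + 1) → ℂ))) (x₀ : ℙ ℂ (Fin (N + 1) → ℂ)) :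
    Set (ℙ ℂ (Fin (N + 1) → ℂ)) :=
  {x ∈ X | Filter.Tendsto (fun η : ℂˣ => wAct w η x) zeroFilter (𝓝 x₀)}


theorem aux_coord {N : ℕ} (i : Fin (N + 1)) :
    Continuous (fun v : {v : Fin (N + 1) → ℂ // v ≠ 0} => v.1 i) :=
  (continuous_apply i).comp continuous_subtype_val

theorem aux_isOpen {N : ℕ} (S : Set (ℙ ℂ (Fin (N + 1) → ℂ)))
    (h : IsOpen {v : {v : Fin (N + 1) → ℂ // v ≠ 0} | Projectivization.mk ℂ v.1 v.2 ∈ S}) :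
    IsOpen S := h

theorem aux_isClosed {N : ℕ} (S : Set (ℙ ℂ (Fin (N + 1) → ℂ)))
    (h : IsClosed {v : {v : Fin (N + 1) → ℂ // v ≠ 0} | Projectivization.mk ℂ v.1 v.2 ∈ S}) :
    IsClosed S := by
  rw [← isOpen_compl_iff] at h ⊢
  exact aux_isOpen _ h

theorem aux_rep {N : ℕ} (v : Fin (N + 1) → ℂ) (hv : v ≠ 0) :
    ∃ c : ℂ, c ≠ 0 ∧ ∀ i, (Projectivization.mk ℂ v hv).rep i = c * v i := by
  obtain ⟨c, hc⟩ := Projectivization.exists_smul_eq_mk_rep ℂ v hv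
  refine ⟨c, c.ne_zero, fun i => ?_⟩
  rw [← hc]; rfl

theorem aux_eq {N : ℕ} (a b : ℙ ℂ (Fin (N + 1) → ℂ)) (c : ℂ)
    (h : ∀ i, a.rep i = c * b.rep i) : a = b := by
  rw [← a.mk_rep, ← b.mk_rep, Projectivization.mk_eq_mk_iff']
  exact ⟨c, by funext i; simp [h i]⟩

theorem aux_act {N : ℕ} (w : Fin (N + 1) → ℤ) (η : ℂˣ) (x : ℙ ℂ (Fin (N + 1) → ℂ)) :
    ∃ c : ℂ, c ≠ 0 ∧ ∀ i, (wAct w η x).rep i = c * ((η : ℂ) ^ (w i) * x.rep i) :=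
  aux_rep _ _

theorem aux_fixed {N : ℕ} (w : Fin (N + 1) → ℤ) (b : ℙ ℂ (Fin (N + 1) → ℂ))
    (hb : ∀ η : ℂˣ, wAct w η b = b) (i j : Fin (N + 1)) (hi : b.rep i ≠ 0)
    (hj : b.rep j ≠ 0) : w i = w j := by
  obtain ⟨c, hc, h⟩ := aux_act w (Units.mk0 (2 : ℂ) two_ne_zero) b
  rw [hb] at h
  have h1 := h i
  have h2 := h j
  simp only [Units.val_mk0] at h1 h2
  have e1 : c * (2 : ℂ) ^ w i = 1 := by
    apply mul_right_cancel₀ hi; rw [one_mul, mul_assoc, ← h1]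
  have e2 : c * (2 : ℂ) ^ w j = 1 := by
    apply mul_right_cancel₀ hj; rw [one_mul, mul_assoc, ← h2]
  have e3 : (2 : ℂ) ^ w i = (2 : ℂ) ^ w j := mul_left_cancel₀ hc (e1.trans e2.symm)
  have e4 : (2 : ℝ) ^ w i = (2 : ℝ) ^ w j := by
    have := congrArg norm e3
    simpa [norm_zpow] using this
  exact zpow_right_injective₀ (by norm_num) (by norm_num) e4

theorem aux_tendsto {N : ℕ} (b : ℙ ℂ (Fin (N + 1) → ℂ)) (i j : Fin (N + 1))
    (hj : b.rep j ≠ 0) :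
    (∀ᶠ z in 𝓝 b, z.rep j ≠ 0) ∧
    Tendsto (fun z : ℙ ℂ (Fin (N + 1) → ℂ) => z.rep i / z.rep j) (𝓝 b)
      (𝓝 (b.rep i / b.rep j)) := by
  have key : ∀ V : Set ℂ, IsOpen V →
      IsOpen {z : ℙ ℂ (Fin (N + 1) → ℂ) | z.rep j ≠ 0 ∧ z.rep i / z.rep j ∈ V} := by
    intro V hV
    apply aux_isOpen
    have h1 : IsOpen {v : {v : Fin (N + 1) → ℂ // v ≠ 0} | v.1 j ≠ 0} :=
      isOpen_ne_fun (aux_coord j) continuous_const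
    have h2 : ContinuousOn (fun v : {v : Fin (N + 1) → ℂ // v ≠ 0} => v.1 i / v.1 j)
        {v | v.1 j ≠ 0} := by
      apply ContinuousOn.div
      · exact (aux_coord i).continuousOn
      · exact (aux_coord j).continuousOn
      · intro v hv; exact hv
    convert h2.isOpen_inter_preimage h1 hV using 1
    ext v
    obtain ⟨c, hc, h⟩ := aux_rep v.1 v.2
    simp only [Set.mem_setOf_eq, Set.mem_inter_iff, Set.mem_preimage, h]
    rw [mul_div_mul_left _ _ hc]
    simp [hc]
  constructor
  · have := (key Set.univ isOpen_univ).mem_nhds (x := b) ⟨hj, trivial⟩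
    filter_upwards [this] with z hz using hz.1
  · rw [tendsto_nhds]
    intro V hV hb
    have := (key V hV).mem_nhds (x := b) ⟨hj, hb⟩
    filter_upwards [this] with z hz using hz.2

theorem aux_units : Tendsto (Units.val : ℂˣ → ℂ) zeroFilter (𝓝[≠] (0 : ℂ)) := tendsto_comap

theorem aux_neBot : zeroFilter.NeBot := by
  unfold zeroFilter
  apply Filter.NeBot.comap_of_range_mem inferInstance
  filter_upwards [self_mem_nhdsWithin] with z hz
  exact ⟨Units.mk0 z hz, rfl⟩

/-- Coordinates of a point attracted to a fixed point `b`. -/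
theorem aux_attract {N : ℕ} (w : Fin (N + 1) → ℤ) (b x : ℙ ℂ (Fin (N + 1) → ℂ))
    (hb : ∀ η : ℂˣ, wAct w η b = b) (k : Fin (N + 1)) (hk : b.rep k ≠ 0)
    (hx : Tendsto (fun η : ℂˣ => wAct w η x) zeroFilter (𝓝 b)) :
    x.rep k ≠ 0 ∧ (∀ i, w i < w k → x.rep i = 0) ∧
      (∀ i, w i = w k → x.rep i * b.rep k = x.rep k * b.rep i) := by
  haveI := aux_neBot
  have hxk : x.rep k ≠ 0 := by
    obtain ⟨η, hη⟩ := (hx.eventually (aux_tendsto b k k hk).1).exists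
    obtain ⟨c, hc, h⟩ := aux_act w η x
    intro h0
    exact hη (by rw [h, h0]; simp)
  have hlim : ∀ i, Tendsto (fun η : ℂˣ => (η : ℂ) ^ (w i - w k) * (x.rep i / x.rep k))
      zeroFilter (𝓝 (b.rep i / b.rep k)) := by
    intro i
    refine ((aux_tendsto b i k hk).2.comp hx).congr fun η => ?_
    obtain ⟨c, hc, h⟩ := aux_act w η x
    have hη := η.ne_zero
    simp only [Function.comp, h]
    rw [mul_div_mul_left _ _ hc, mul_div_mul_comm, zpow_sub₀ hη]
  refine ⟨hxk, fun i hi => ?_, fun i hi => ?_⟩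
  · have hbi : b.rep i = 0 := by
      by_contra h
      exact hi.ne (aux_fixed w b hb i k h hk)
    have h1 := hlim i
    rw [hbi, zero_div] at h1
    obtain ⟨n, hn⟩ := Int.eq_ofNat_of_zero_le (sub_nonneg.2 hi.le)
    have h2 : Tendsto (fun η : ℂˣ => (η : ℂ) ^ n) zeroFilter (𝓝 (0 ^ n)) :=
      (aux_units.mono_right nhdsWithin_le_nhds).pow n
    have h3 := h2.mul h1
    rw [mul_zero] at h3
    have h4 : Tendsto (fun _ : ℂˣ => x.rep i / x.rep k) zeroFilter (𝓝 0) := by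
      refine h3.congr fun η => ?_
      rw [← mul_assoc, ← zpow_natCast, ← zpow_add₀ η.ne_zero]
      have : (n : ℤ) + (w i - w k) = 0 := by omega
      rw [this]; simp
    have h5 := tendsto_nhds_unique h4 tendsto_const_nhds
    rcases div_eq_zero_iff.1 h5.symm with h | h
    · exact h
    · exact absurd h hxk
  · have h1 := hlim i
    rw [hi, sub_self] at h1
    simp only [zpow_zero, one_mul] at h1
    have h5 := tendsto_nhds_unique h1 tendsto_const_nhds
    rw [div_eq_div_iff hk hxk] at h5
    linear_combination -h5

theorem aux_closure {N : ℕ} (w : Fin (N + 1) → ℤ) (X : Set (ℙ ℂ (Fin (N + 1) → ℂ)))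
    (a y : ℙ ℂ (Fin (N + 1) → ℂ))
    (ha : ∀ η : ℂˣ, wAct w η a = a) (k : Fin (N + 1)) (hk : a.rep k ≠ 0)
    (hy : y ∈ closure (attractIn w X a)) :
    (∀ i, w i < w k → y.rep i = 0) ∧
      (∀ i, w i = w k → y.rep i * a.rep k = y.rep k * a.rep i) := by
  let C : Set (ℙ ℂ (Fin (N + 1) → ℂ)) := {y | (∀ i, w i < w k → y.rep i = 0) ∧
      (∀ i, w i = w k → y.rep i * a.rep k = y.rep k * a.rep i)}
  have hC : IsClosed C := by
    apply aux_isClosed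
    have h1 : IsClosed {v : {v : Fin (N + 1) → ℂ // v ≠ 0} | (∀ i, w i < w k → v.1 i = 0) ∧
      (∀ i, w i = w k → v.1 i * a.rep k = v.1 k * a.rep i)} := by
      simp only [Set.setOf_and, Set.setOf_forall]
      refine IsClosed.inter ?_ ?_
      · exact isClosed_iInter fun i => isClosed_iInter fun _ =>
          isClosed_eq (aux_coord i) continuous_const
      · exact isClosed_iInter fun i => isClosed_iInter fun _ =>
          isClosed_eq ((aux_coord i).mul continuous_const) ((aux_coord k).mul continuous_const)
    convert h1 using 1
    ext v
    obtain ⟨c, hc, h⟩ := aux_rep v.1 v.2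
    simp [C, h, hc, mul_assoc]
  have hsub : attractIn w X a ⊆ C := fun x hx => (aux_attract w a x ha k hk hx.2).2
  exact closure_minimal hsub hC hy

theorem aux_exists {N : ℕ} (a : ℙ ℂ (Fin (N + 1) → ℂ)) : ∃ k, a.rep k ≠ 0 := by
  by_contra! h
  exact a.rep_nonzero (funext h)

theorem aux_step {N : ℕ} (w : Fin (N + 1) → ℤ) (X : Set (ℙ ℂ (Fin (N + 1) → ℂ)))
    (a b : ℙ ℂ (Fin (N + 1) → ℂ)) (ha : a ∈ fixedIn w X) (hb : b ∈ fixedIn w X)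
    (h : (closure (attractIn w X a) ∩ attractIn w X b).Nonempty) :
    a = b ∨ w (aux_exists a).choose < w (aux_exists b).choose := by
  have hj := (aux_exists a).choose_spec
  have hk := (aux_exists b).choose_spec
  generalize (aux_exists a).choose = j at hj ⊢
  generalize (aux_exists b).choose = k at hk ⊢
  obtain ⟨y, hya, hyb⟩ := h
  obtain ⟨a1, a2⟩ := aux_closure w X a y ha.2 j hj hya
  obtain ⟨b0, b1, b2⟩ := aux_attract w b y hb.2 k hk hyb.2
  rcases lt_trichotomy (w j) (w k) with hlt | heq | hgt
  · exact Or.inr hlt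
  · left
    have hyj : y.rep j ≠ 0 := by
      intro h0
      have := a2 k heq.symm
      rw [h0, zero_mul] at this
      exact (mul_ne_zero b0 hj) this
    have hA : ∀ i, a.rep i = (a.rep j / y.rep j) * (if w i = w k then y.rep i else 0) := by
      intro i
      split_ifs with hi
      · have := a2 i (hi.trans heq.symm)
        field_simp
        linear_combination -this
      · rw [mul_zero]
        by_contra h
        exact hi ((aux_fixed w a ha.2 i j h hj).trans heq)
    have hB : ∀ i, (if w i = w k then y.rep i else 0) = (y.rep k / b.rep k) * b.rep i := by
      intro i
      split_ifs with hi
      · have := b2 i hi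
        field_simp
        linear_combination this
      · have : b.rep i = 0 := by
          by_contra h
          exact hi (aux_fixed w b hb.2 i k h hk)
        rw [this, mul_zero]
    apply aux_eq a b ((a.rep j / y.rep j) * (y.rep k / b.rep k))
    intro i
    rw [hA, hB, mul_assoc]
  · exact absurd (a1 k hgt) b0

theorem aux_chain {N : ℕ} (w : Fin (N + 1) → ℤ) (X : Set (ℙ ℂ (Fin (N + 1) → ℂ)))
    (a b : ℙ ℂ (Fin (N + 1) → ℂ))
    (h : Relation.ReflTransGen
        (fun a b => a ∈ fixedIn w X ∧ b ∈ fixedIn w X ∧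
          (closure (attractIn w X a) ∩ attractIn w X b).Nonempty) a b) :
    a = b ∨ w (aux_exists a).choose < w (aux_exists b).choose := by
  induction h with
  | refl => exact Or.inl rfl
  | tail _ hs ih =>
    have h2 := aux_step w X _ _ hs.1 hs.2.1 hs.2.2
    rcases ih with rfl | ih
    · exact h2
    · rcases h2 with rfl | h2
      · exact Or.inr ih
      · exact Or.inr (ih.trans h2)

/-- If `X ⊆ ℙ^N(ℂ)` is locally closed, stable under the weighted `ℂ*`-action, and
has finitely many fixed points, then the reflexive-transitive closure of the
relation `x ≺₀ x' ⟺ cl(X_x) ∩ X_{x'} ≠ ∅` on the fixed points of `X` is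
antisymmetric, i.e. a partial order. -/
theorem statement4 (N : ℕ) (w : Fin (N + 1) → ℤ) (X : Set (ℙ ℂ (Fin (N + 1) → ℂ)))
    (hlc : IsLocallyClosed X)
    (hstab : ∀ (η : ℂˣ) (x : ℙ ℂ (Fin (N + 1) → ℂ)), x ∈ X → wAct w η x ∈ X)
    (hfin : (fixedIn w X).Finite) :
    ∀ x x' : ℙ ℂ (Fin (N + 1) → ℂ), x ∈ fixedIn w X → x' ∈ fixedIn w X →
      Relation.ReflTransGen
        (fun a b => a ∈ fixedIn w X ∧ b ∈ fixedIn w X ∧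
          (closure (attractIn w X a) ∩ attractIn w X b).Nonempty) x x' →
      Relation.ReflTransGen
        (fun a b => a ∈ fixedIn w X ∧ b ∈ fixedIn w X ∧
          (closure (attractIn w X a) ∩ attractIn w X b).Nonempty) x' x →
      x = x' := by
  intro x x' _ _ h1 h2
  rcases aux_chain w X _ _ h1 with h | h
  · exact h
  · rcases aux_chain w X _ _ h2 with h' | h'
    · exact h'.symm
    · exact absurd h' h.le.not_gt
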